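/- Let p > 3 be a prime and let a, b ∈ ℚ_p be nonzero with |a|_p = |b|_p = 1. If |−4a³ − 27b²|_p = 1 and u_{p−2} ≡ 0 (mod p), then the equation x³ + a·x = b has exactly three distinct solutions x ∈ ℚ_p with |x|_p = 1. -/

import Mathlib

/-!
Let `f = X ^ 3 + a X - b` and let bars denote reduction modulo `p`. By the recurrence, `u (n + 1)`
is the coefficient of `X ^ 2` in the remainder of `X ^ (n + 3)` modulo `f`, so `u (p - 2) ≡ 0`
says that `X ^ p ≡ α X + β` modulo `f̄`. As `f̄ (X ^ p) = f̄ (X) ^ p`, the polynomial `f̄` divides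
`f̄ (α X + β)`, hence `f̄ (α X + β) = α ^ 3 f̄ (X)`. Separability of `f̄` excludes `α = 0`, since
`X ^ p - β = (X - β) ^ p`; comparing coefficients then gives `β = 0` and `α = 1`. So `f̄` divides
`X ^ p - X`, that is, it has three simple roots in `ZMod p`, and these lift by Hensel's lemma.
-/

open Polynomial

/-- The polynomial `X ^ 3 + a * X - b`, whose roots are the solutions of `x ^ 3 + a * x = b`. -/
noncomputable def depressedCubic {R : Type*} [CommRing R] (a b : R) : R[X] :=
  X ^ 3 + C a * X - C b

/-- The linear recurrence defining the sequence `u` of the theorem, over an arbitrary ring.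
Indexing starts at `1`; the value `v 0` is unconstrained. -/
structure IsDepressedCubicRecurrence {R : Type*} [CommRing R] (a b : R) (v : ℕ → R) : Prop where
  one : v 1 = 0
  two : v 2 = -a
  three : v 3 = b
  add_three : ∀ n, 1 ≤ n → v (n + 3) = b * v n - a * v (n + 1)

theorem coeffs_eq_zero_of_quadratic_eq_zero {R : Type*} [Semiring R] {c₂ c₁ c₀ : R}
    (h : C c₂ * X ^ 2 + C c₁ * X + C c₀ = 0) : c₂ = 0 ∧ c₁ = 0 ∧ c₀ = 0 :=
  ⟨by simpa [coeff_X, coeff_C] using congrArg (coeff · 2) h,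
    by simpa [coeff_X, coeff_C] using congrArg (coeff · 1) h,
    by simpa using congrArg (coeff · 0) h⟩

section CommRing

variable {R S : Type*} [CommRing R] [CommRing S]

theorem IsDepressedCubicRecurrence.map {a b : R} {v : ℕ → R}
    (hv : IsDepressedCubicRecurrence a b v) (φ : R →+* S) :
    IsDepressedCubicRecurrence (φ a) (φ b) (φ ∘ v) where
  one := by simp [hv.one]
  two := by simp [hv.two]
  three := by simp [hv.three]
  add_three n hn := by simp [hv.add_three n hn]

theorem depressedCubic_map (φ : R →+* S) (a b : R) :
    (depressedCubic a b).map φ = depressedCubic (φ a) (φ b) := by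
  simp [depressedCubic]

theorem depressedCubic_monic (a b : R) : (depressedCubic a b).Monic := by
  unfold depressedCubic
  monicity!

theorem natDegree_depressedCubic [Nontrivial R] (a b : R) :
    (depressedCubic a b).natDegree = 3 := by
  unfold depressedCubic
  compute_degree!

theorem isRoot_depressedCubic_iff {a b x : R} :
    (depressedCubic a b).IsRoot x ↔ x ^ 3 + a * x = b := by
  simp [depressedCubic, sub_eq_zero]

theorem isUnit_of_isRoot_depressedCubic {a b x : R} (hb : IsUnit b)
    (hx : (depressedCubic a b).IsRoot x) : IsUnit x := by
  have hfactor : x * (x ^ 2 + a) = b := by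
    linear_combination isRoot_depressedCubic_iff.1 hx
  exact isUnit_of_mul_isUnit_left (hfactor ▸ hb)

-- With `g = 3 f - X f' = 2 a X - 3 b`, the discriminant equals `(3 g + 18 b) g - 4 a ^ 2 f'`.
theorem depressedCubic_separable {a b : R} (hdisc : IsUnit (-4 * a ^ 3 - 27 * b ^ 2)) :
    (depressedCubic a b).Separable := by
  obtain ⟨d, hd⟩ := hdisc.exists_left_inv
  have hder : (depressedCubic a b).derivative = 3 * X ^ 2 + C a := by
    simp only [depressedCubic, derivative_sub, derivative_add, derivative_X_pow, derivative_C_mul,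
      derivative_X, derivative_C, map_natCast]
    norm_num
  refine ⟨C d * (18 * C a * X + 27 * C b),
    -C d * ((6 * C a * X + 9 * C b) * X + 4 * C a ^ 2), ?_⟩
  have hdC : (C d * (-4 * C a ^ 3 - 27 * C b ^ 2) : R[X]) = 1 := by
    simpa only [map_mul, map_sub, map_neg, map_pow, map_ofNat, map_one] using congrArg C hd
  rw [hder, depressedCubic]
  linear_combination hdC

theorem depressedCubic_comp_linear_sub (a b α β : R) :
    (depressedCubic a b).comp (C α * X + C β) - C (α ^ 3) * depressedCubic a b =
      C (3 * α ^ 2 * β) * X ^ 2 + C (3 * α * β ^ 2 + a * α - a * α ^ 3) * X +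
        C (β ^ 3 + a * β - b + α ^ 3 * b) := by
  simp only [depressedCubic, sub_comp, add_comp, mul_comp, pow_comp, X_comp, C_comp, map_add,
    map_sub, map_mul, map_pow, map_ofNat]
  ring

theorem depressedCubic_dvd_X_pow_sub {a b : R} {v : ℕ → R}
    (hv : IsDepressedCubicRecurrence a b v) (n : ℕ) :
    depressedCubic a b ∣ X ^ (n + 3) -
      (C (v (n + 1)) * X ^ 2 + C (v (n + 2)) * X + C (v (n + 3) + a * v (n + 1))) := by
  induction n with
  | zero =>
    refine ⟨1, ?_⟩
    simp only [depressedCubic, zero_add, hv.one, hv.two, hv.three, map_zero, map_neg, mul_zero,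
      add_zero]
    ring
  | succ n ih =>
    obtain ⟨q, hq⟩ := ih
    have hstep : v (n + 4) = b * v (n + 1) - a * v (n + 2) := hv.add_three (n + 1) (by omega)
    refine ⟨X * q + C (v (n + 1)), ?_⟩
    simp only [add_assoc, Nat.reduceAdd, hstep, depressedCubic, map_add, map_mul, map_sub] at hq ⊢
    linear_combination X * hq

end CommRing

section Field

variable {K : Type*} [Field K]

theorem linear_eq_X_of_depressedCubic_dvd_comp {a b α β : K} (h3 : (3 : K) ≠ 0) (ha : a ≠ 0)
    (hb : b ≠ 0) (hα : α ≠ 0)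
    (h : depressedCubic a b ∣ (depressedCubic a b).comp (C α * X + C β)) :
    α = 1 ∧ β = 0 := by
  have hremainder : C (3 * α ^ 2 * β) * X ^ 2 + C (3 * α * β ^ 2 + a * α - a * α ^ 3) * X +
      C (β ^ 3 + a * β - b + α ^ 3 * b) = 0 := by
    refine eq_zero_of_dvd_of_natDegree_lt
      (depressedCubic_comp_linear_sub a b α β ▸ h.sub (dvd_mul_left _ _)) ?_
    rw [natDegree_depressedCubic]
    exact Nat.lt_succ_of_le (by compute_degree)
  obtain ⟨hcoeff₂, hcoeff₁, hcoeff₀⟩ := coeffs_eq_zero_of_quadratic_eq_zero hremainder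
  obtain rfl : β = 0 := by simpa [h3, hα] using hcoeff₂
  have hcube : α ^ 3 = 1 := mul_right_cancel₀ hb (by linear_combination hcoeff₀)
  exact ⟨mul_left_cancel₀ ha (by linear_combination hcoeff₁ + a * hcube), rfl⟩

variable [Fintype K]

theorem dvd_comp_of_dvd_X_pow_card_sub {f g : K[X]} (h : f ∣ X ^ Fintype.card K - g) :
    f ∣ f.comp g := by
  have hfrob : f ∣ f.comp (X ^ Fintype.card K) := by
    rw [← expand_eq_comp_X_pow, FiniteField.expand_card]
    exact dvd_pow_self f Fintype.card_ne_zero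
  have hsub : X ^ Fintype.card K - g ∣ f.comp (X ^ Fintype.card K) - f.comp g := by
    simpa only [eval_map, comp] using sub_dvd_eval_sub (X ^ Fintype.card K) g (f.map C)
  exact (dvd_sub_right hfrob).1 (h.trans hsub)

theorem natDegree_le_one_of_dvd_X_pow_card_sub_C {f : K[X]} (hf : f.Separable) {β : K}
    (h : f ∣ X ^ Fintype.card K - C β) : f.natDegree ≤ 1 := by
  have hpow : (X ^ Fintype.card K - C β : K[X]) = (X - C β) ^ Fintype.card K := by
    rw [← FiniteField.expand_card (X - C β), map_sub, expand_X, expand_C]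
  rw [hpow, hf.squarefree.dvd_pow_iff_dvd Fintype.card_ne_zero] at h
  exact (natDegree_le_of_dvd h (X_sub_C_ne_zero β)).trans (natDegree_X_sub_C_le β)

theorem splits_of_dvd_X_pow_card_sub_X {f : K[X]} (h : f ∣ X ^ Fintype.card K - X) :
    f.Splits := by
  have hsplits : (X ^ Fintype.card K - X : K[X]).Splits := by
    simpa using (FiniteField.isSplittingField_sub K K).splits
  exact hsplits.of_dvd (FiniteField.X_pow_card_sub_X_ne_zero K Fintype.one_lt_card) h

theorem depressedCubic_splits_of_recurrence_eq_zero {a b : K} {v : ℕ → K}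
    (hK : 3 ≤ Fintype.card K) (h3 : (3 : K) ≠ 0) (ha : a ≠ 0) (hb : b ≠ 0)
    (hsep : (depressedCubic a b).Separable) (hv : IsDepressedCubicRecurrence a b v)
    (hzero : v (Fintype.card K - 2) = 0) : (depressedCubic a b).Splits := by
  obtain ⟨α, β, hlinear⟩ :
      ∃ α β : K, depressedCubic a b ∣ X ^ Fintype.card K - (C α * X + C β) := by
    obtain ⟨n, hn⟩ := Nat.exists_eq_add_of_le' hK
    rw [hn] at hzero
    have hdvd := depressedCubic_dvd_X_pow_sub hv n
    rw [show v (n + 1) = 0 from hzero, ← hn] at hdvd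
    exact ⟨_, _, by simpa only [map_zero, zero_mul, zero_add] using hdvd⟩
  have hα : α ≠ 0 := by
    rintro rfl
    have := natDegree_le_one_of_dvd_X_pow_card_sub_C hsep (β := β) (by simpa using hlinear)
    simp [natDegree_depressedCubic] at this
  obtain ⟨rfl, rfl⟩ := linear_eq_X_of_depressedCubic_dvd_comp h3 ha hb hα
    (dvd_comp_of_dvd_X_pow_card_sub hlinear)
  exact splits_of_dvd_X_pow_card_sub_X (by simpa using hlinear)

end Field

section Henselian

universe u

variable {R K : Type u} [CommRing R] [IsDomain R] [Field K]

theorem henselianLocalRing_of_isAdicComplete {R : Type*} [CommRing R] [IsLocalRing R]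
    [IsAdicComplete (IsLocalRing.maximalIdeal R) R] : HenselianLocalRing R where
  is_henselian f hf x hx hunit :=
    HenselianRing.is_henselian f hf x hx (hunit.map (Ideal.Quotient.mk _))

theorem card_roots_toFinset_of_splits_map [HenselianLocalRing R] [DecidableEq R]
    {φ : R →+* K} (hφ : Function.Surjective φ) {f : R[X]} (hf : f.Monic) (hsep : f.Separable)
    (hsplits : (f.map φ).Splits) : f.roots.toFinset.card = f.natDegree := by
  classical
  have hlift : (f.map φ).roots.toFinset ⊆ f.roots.toFinset.image φ := by
    intro r hr
    have hroot : f.eval₂ φ r = 0 := by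
      simpa [eval_map] using isRoot_of_mem_roots (Multiset.mem_toFinset.1 hr)
    have hHensel := ((HenselianLocalRing.TFAE R).out 0 2 rfl rfl).1 ‹_› (K := K)
    obtain ⟨x, hx, rfl⟩ := hHensel φ hφ f hf r hroot (hsep.eval₂_derivative_ne_zero φ hroot)
    exact Finset.mem_image_of_mem φ (Multiset.mem_toFinset.2 ((mem_roots hf.ne_zero).2 hx))
  refine le_antisymm ((Multiset.toFinset_card_le _).trans (card_roots' f)) ?_
  calc f.natDegree = (f.map φ).natDegree := (hf.natDegree_map φ).symm
    _ = (f.map φ).roots.toFinset.card := by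
      rw [hsplits.natDegree_eq_card_roots, Multiset.toFinset_card_of_nodup (nodup_roots hsep.map)]
    _ ≤ (f.roots.toFinset.image φ).card := Finset.card_le_card hlift
    _ ≤ f.roots.toFinset.card := Finset.card_image_le

theorem card_roots_depressedCubic_eq_three [HenselianLocalRing R] [DecidableEq R] [Fintype K]
    {φ : R →+* K} (hφ : Function.Surjective φ) (hK : 3 ≤ Fintype.card K) (h3 : (3 : K) ≠ 0)
    {a b : R} (ha : IsUnit a) (hb : IsUnit b) (hdisc : IsUnit (-4 * a ^ 3 - 27 * b ^ 2))
    {v : ℕ → K} (hv : IsDepressedCubicRecurrence (φ a) (φ b) v)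
    (hzero : v (Fintype.card K - 2) = 0) :
    (depressedCubic a b).roots.toFinset.card = 3 := by
  have hsep := depressedCubic_separable hdisc
  have hsep_map : (depressedCubic (φ a) (φ b)).Separable := depressedCubic_map φ a b ▸ hsep.map
  have hsplits := depressedCubic_splits_of_recurrence_eq_zero hK h3 (ha.map φ).ne_zero
    (hb.map φ).ne_zero hsep_map hv hzero
  rw [← depressedCubic_map] at hsplits
  rw [card_roots_toFinset_of_splits_map hφ (depressedCubic_monic a b) hsep hsplits,
    natDegree_depressedCubic]

end Henselian

section PadicInt

variable {p : ℕ} [Fact p.Prime]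

instance henselianLocalRing_padicInt : HenselianLocalRing ℤ_[p] :=
  henselianLocalRing_of_isAdicComplete

theorem toZMod_eq_natCast_of_norm_sub_lt_one {x : ℤ_[p]} {n : ℕ} (h : ‖x - n‖ < 1) :
    PadicInt.toZMod x = n := by
  have hmem : x - n ∈ RingHom.ker (PadicInt.toZMod (p := p)) := by
    rwa [PadicInt.ker_toZMod, IsLocalRing.mem_maximalIdeal, PadicInt.mem_nonunits]
  simpa [sub_eq_zero] using hmem

theorem isRoot_depressedCubic_iff_coe {a b x : ℤ_[p]} :
    (depressedCubic a b).IsRoot x ↔ (x : ℚ_[p]) ^ 3 + a * x = b :=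
  isRoot_depressedCubic_iff.trans
    ⟨fun h => by exact_mod_cast congrArg ((↑) : ℤ_[p] → ℚ_[p]) h,
      fun h => PadicInt.ext (by exact_mod_cast h)⟩

theorem exists_three_solutions_of_card_roots_eq_three [DecidableEq ℤ_[p]] {a b : ℤ_[p]}
    (hb : IsUnit b)
    (hcard : (depressedCubic a b).roots.toFinset.card = 3) :
    ∃ x y z : ℚ_[p], x ≠ y ∧ x ≠ z ∧ y ≠ z ∧
      (‖x‖ = 1 ∧ x ^ 3 + a * x = b) ∧
      (‖y‖ = 1 ∧ y ^ 3 + a * y = b) ∧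
      (‖z‖ = 1 ∧ z ^ 3 + a * z = b) ∧
      (∀ w : ℚ_[p], ‖w‖ = 1 → w ^ 3 + a * w = b → w = x ∨ w = y ∨ w = z) := by
  obtain ⟨x, y, z, hxy, hxz, hyz, hroots⟩ := Finset.card_eq_three.1 hcard
  have hmem (w : ℤ_[p]) : (depressedCubic a b).IsRoot w ↔ w = x ∨ w = y ∨ w = z := by
    simpa [(depressedCubic_monic a b).ne_zero] using Finset.ext_iff.1 hroots w
  have hsol (w : ℤ_[p]) (hw : (depressedCubic a b).IsRoot w) :
      ‖(w : ℚ_[p])‖ = 1 ∧ (w : ℚ_[p]) ^ 3 + a * w = b :=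
    ⟨PadicInt.isUnit_iff.1 (isUnit_of_isRoot_depressedCubic hb hw),
      isRoot_depressedCubic_iff_coe.1 hw⟩
  refine ⟨x, y, z, Subtype.coe_ne_coe.2 hxy, Subtype.coe_ne_coe.2 hxz, Subtype.coe_ne_coe.2 hyz,
    hsol x ((hmem x).2 (by simp)), hsol y ((hmem y).2 (by simp)), hsol z ((hmem z).2 (by simp)),
    fun w hw hwb => ?_⟩
  obtain ⟨w, rfl⟩ : ∃ w' : ℤ_[p], (w' : ℚ_[p]) = w := ⟨⟨w, hw.le⟩, rfl⟩
  exact ((hmem w).1 (isRoot_depressedCubic_iff_coe.2 hwb)).imp (congrArg _)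
    (Or.imp (congrArg _) (congrArg _))

end PadicInt

/-- For a prime `p > 3` and nonzero `a b : ℚ_p` with `|a|_p = |b|_p = 1`:
if `|−4a³ − 27b²|_p = 1` and `u_{p−2} ≡ 0 (mod p)`, then `x³ + a·x = b` has exactly three
distinct solutions with `|x|_p = 1`.  Here `a₀, b₀` are the first digits of `a, b` and
`(u_n)` is the integer sequence `u₁ = 0`, `u₂ = −a₀`, `u₃ = b₀`,
`u_{n+3} = b₀·u_n − a₀·u_{n+1}`. -/
theorem stmt_13 (p : ℕ) [Fact p.Prime] (hp : 3 < p)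
    (a b : ℚ_[p]) (ha : a ≠ 0) (hb : b ≠ 0)
    (hna : ‖a‖ = 1) (hnb : ‖b‖ = 1)
    (a0 b0 : ℕ) (ha0l : 1 ≤ a0) (ha0u : a0 < p) (hb0l : 1 ≤ b0) (hb0u : b0 < p)
    (hda : ‖a - (a0 : ℚ_[p])‖ < 1) (hdb : ‖b - (b0 : ℚ_[p])‖ < 1)
    (u : ℕ → ℤ) (hu1 : u 1 = 0) (hu2 : u 2 = -(a0 : ℤ)) (hu3 : u 3 = (b0 : ℤ))
    (hurec : ∀ n, 1 ≤ n → u (n + 3) = (b0 : ℤ) * u n - (a0 : ℤ) * u (n + 1))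
    (hDnorm : ‖-4 * a ^ 3 - 27 * b ^ 2‖ = 1)
    (hu : ((u (p - 2) : ℤ) : ZMod p) = 0) :
    ∃ x y z : ℚ_[p], x ≠ y ∧ x ≠ z ∧ y ≠ z ∧
      (‖x‖ = 1 ∧ x ^ 3 + a * x = b) ∧
      (‖y‖ = 1 ∧ y ^ 3 + a * y = b) ∧
      (‖z‖ = 1 ∧ z ^ 3 + a * z = b) ∧
      (∀ w : ℚ_[p], ‖w‖ = 1 → w ^ 3 + a * w = b → w = x ∨ w = y ∨ w = z) := by
  classical
  obtain ⟨a, rfl⟩ : ∃ a' : ℤ_[p], (a' : ℚ_[p]) = a := ⟨⟨a, hna.le⟩, rfl⟩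
  obtain ⟨b, rfl⟩ : ∃ b' : ℤ_[p], (b' : ℚ_[p]) = b := ⟨⟨b, hnb.le⟩, rfl⟩
  have hdisc : IsUnit (-4 * a ^ 3 - 27 * b ^ 2) :=
    PadicInt.isUnit_iff.2 (by rw [PadicInt.norm_def]; exact_mod_cast hDnorm)
  have hcard : 3 ≤ Fintype.card (ZMod p) := by rw [ZMod.card]; exact hp.le
  have h3 : (3 : ZMod p) ≠ 0 := by
    exact_mod_cast fun h => hp.not_ge (Nat.le_of_dvd three_pos ((ZMod.natCast_eq_zero_iff 3 p).1 h))
  have hrec : IsDepressedCubicRecurrence (PadicInt.toZMod a) (PadicInt.toZMod b)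
      (Int.castRingHom (ZMod p) ∘ u) := by
    rw [toZMod_eq_natCast_of_norm_sub_lt_one (n := a0) (by exact_mod_cast hda),
      toZMod_eq_natCast_of_norm_sub_lt_one (n := b0) (by exact_mod_cast hdb)]
    simpa using (IsDepressedCubicRecurrence.mk hu1 hu2 hu3 hurec).map (Int.castRingHom (ZMod p))
  have hb_unit : IsUnit b := PadicInt.isUnit_iff.2 hnb
  exact exists_three_solutions_of_card_roots_eq_three hb_unit <|
    card_roots_depressedCubic_eq_three (ZMod.ringHom_surjective PadicInt.toZMod) hcard h3
      (PadicInt.isUnit_iff.2 hna) hb_unit hdisc hrec (by rwa [ZMod.card])
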